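/- Let G₁ be an r₁-regular graph on n₁ vertices and m₁ edges, and G₂ an r₂-regular graph on n₂ vertices, and let α ∈ [0,1]. (1) If r₁ = 1, then the A_α-spectrum of the subdivision-edge join G₁ ∨̲ G₂ consists precisely of: α; the values α + λ_i(A_α(G₂)) for i = 2,…,n₂; and the three roots of F(x) = (x−α−r₂)(x² − α(3+n₂)x + (α²n₂+4α−2)) − n₂(1−α)²(x−α). (2) If r₁ ≥ 2, then the A_α-spectrum of G₁ ∨̲ G₂ consists precisely of: α(2+n₂) repeated m₁−n₁ times; αm₁ + λ_i(A_α(G₂)) for i = 2,…,n₂; the two roots of G_i(x) = x² − α(2+r₁+n₂)x + (α²r₁n₂+3αr₁−r₁) − (1−α)λ_i(A_α(G₁)) for each i = 2,…,n₁; and the three roots of F(x) = (x−αm₁−r₂)(x² − α(2+r₁+n₂)x + r₁(α²n₂+4α−2)) − m₁n₂(1−α)²(x−αr₁). -/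

import Mathlib

open Matrix Polynomial
open scoped Classical

noncomputable section

/-- `A_α(G) = α·D(G) + (1-α)·A(G)`, where `D(G)` is the diagonal degree matrix and
`A(G)` the adjacency matrix. -/
def Aalpha {V : Type*} [Fintype V] (G : SimpleGraph V) (α : ℝ) : Matrix V V ℝ :=
  α • Matrix.diagonal (fun v => (G.degree v : ℝ)) + (1 - α) • G.adjMatrix ℝ

/-- The subdivision-edge join `G₁ ∨̲ G₂`: take the subdivision graph `S(G₁)` (a new
vertex inserted in each edge of `G₁`) together with `G₂`, and join every inserted
vertex of `S(G₁)` with every vertex of `G₂`. -/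
def subdivisionEdgeJoin {V₁ V₂ : Type*} (G₁ : SimpleGraph V₁) (G₂ : SimpleGraph V₂) :
    SimpleGraph (V₁ ⊕ (↥G₁.edgeSet ⊕ V₂)) :=
  SimpleGraph.fromRel fun a b =>
    match a, b with
    | Sum.inl v, Sum.inr (Sum.inl e) => v ∈ (e : Sym2 V₁)
    | Sum.inr (Sum.inl _), Sum.inr (Sum.inr _) => True
    | Sum.inr (Sum.inr u), Sum.inr (Sum.inr w) => G₂.Adj u w
    | _, _ => False

section BlockDeterminants

variable {K : Type*} [Field K] {m n l : Type*} [Fintype m] [Fintype n] [Fintype l]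
  [DecidableEq m] [DecidableEq n] [DecidableEq l]

/-- Schur complement with respect to the upper left block, when that block acts on the upper right
block as a nonzero scalar. -/
lemma det_fromBlocks_of_mul_eq_smul₁₁ {A : Matrix m m K} {B : Matrix m n K} {s : K} (hs : s ≠ 0)
    (h : A * B = s • B) (C : Matrix n m K) (D : Matrix n n K) :
    (fromBlocks A B C D).det = A.det * (D - s⁻¹ • (C * B)).det := by
  have key : fromBlocks A B C D * fromBlocks 1 (-s⁻¹ • B) 0 1 =
      fromBlocks A 0 C (D - s⁻¹ • (C * B)) := by
    rw [fromBlocks_multiply]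
    congr 1
    · simp
    · simp [h, smul_smul, hs]
    · simp
    · simp [sub_eq_neg_add]
  have := congrArg det key
  rwa [det_mul, det_fromBlocks_zero₂₁, det_fromBlocks_zero₁₂, det_one, det_one, mul_one,
    mul_one] at this

/-- Schur complement with respect to the lower right block, when that block acts on the lower left
block as a nonzero scalar. -/
lemma det_fromBlocks_of_mul_eq_smul₂₂ {D : Matrix n n K} {C : Matrix n m K} {s : K} (hs : s ≠ 0)
    (h : D * C = s • C) (A : Matrix m m K) (B : Matrix m n K) :
    (fromBlocks A B C D).det = (A - s⁻¹ • (B * C)).det * D.det := by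
  have key : fromBlocks A B C D * fromBlocks 1 0 (-s⁻¹ • C) 1 =
      fromBlocks (A - s⁻¹ • (B * C)) B 0 D := by
    rw [fromBlocks_multiply]
    congr 1
    · simp [sub_eq_add_neg]
    · simp
    · simp [h, smul_smul, hs]
    · simp
  have := congrArg det key
  rwa [det_mul, det_fromBlocks_zero₁₂, det_fromBlocks_zero₂₁, det_one, det_one, mul_one,
    mul_one] at this

/-- A rank one update of a matrix with constant row sums by a multiple of the all-ones matrix. -/
lemma mul_det_sub_smul_allOnes {P : Matrix m m K} {p : K} (hp : p ≠ 0)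
    (h : P * (of fun _ _ => 1 : Matrix m m K) = p • of fun _ _ => 1) (κ : K) :
    p * (P - κ • of fun _ _ => 1).det = (p - κ * Fintype.card m) * P.det := by
  have key : P - κ • (of fun _ _ => 1) =
      P * (1 + replicateCol Unit (fun _ : m => (1 : K)) *
        replicateRow Unit (fun _ : m => -(p⁻¹ * κ))) := by
    have hJ : replicateCol Unit (fun _ : m => (1 : K)) *
        replicateRow Unit (fun _ : m => -(p⁻¹ * κ)) =
        (-(p⁻¹ * κ)) • (of fun _ _ => 1 : Matrix m m K) := by
      ext i j
      simp [Matrix.mul_apply]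
    rw [hJ, mul_add, mul_one, mul_smul_comm, h, smul_smul, sub_eq_add_neg, ← neg_smul]
    congr 2
    field_simp
  rw [key, det_mul, det_one_add_replicateCol_mul_replicateRow]
  simp only [dotProduct, mul_one, Finset.sum_const, Finset.card_univ, nsmul_eq_mul]
  field_simp
  ring

lemma pow_card_mul_det_smul_one_sub_mul (b : K) (A : Matrix m n K) (B : Matrix n m K) :
    b ^ Fintype.card n * (b • (1 : Matrix m m K) - A * B).det =
      b ^ Fintype.card m * (b • (1 : Matrix n n K) - B * A).det := by
  have := congrArg (Polynomial.eval b) (charpoly_mul_comm' A B)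
  simpa [eval_charpoly, smul_one_eq_diagonal] using this

/-- The determinant of the block matrix pattern of a subdivision-edge join. -/
lemma det_fromBlocks_subdivision_join (a b c s q : K) (B : Matrix m n K) (N : Matrix l l K)
    (ha : a ≠ 0) (hs : s ≠ 0) (hq : a * b - q * c ^ 2 ≠ 0)
    (hN : N * (of fun _ _ => 1 : Matrix l n K) = s • of fun _ _ => 1)
    (hB : Bᵀ * B * (of fun _ _ => 1 : Matrix n n K) = q • of fun _ _ => 1) :
    b ^ Fintype.card m * ((a * b - q * c ^ 2) * s *
      (fromBlocks (a • (1 : Matrix m m K)) (fromCols (-c • B) 0) (fromRows (-c • Bᵀ) 0)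
        (fromBlocks (b • (1 : Matrix n n K)) (-c • of fun _ _ => 1)
          (-c • of fun _ _ => 1) N)).det) =
    b ^ Fintype.card n * ((s * (a * b - q * c ^ 2) -
        Fintype.card n * Fintype.card l * c ^ 2 * a) *
      N.det * ((a * b) • (1 : Matrix m m K) - c ^ 2 • (B * Bᵀ)).det) := by
  set P : Matrix n n K := b • 1 - ((c ^ 2 / a) • Bᵀ) * B with hP
  have hp : b - q * c ^ 2 / a ≠ 0 := by
    intro h
    apply hq
    field_simp at h
    linear_combination h
  have h₁ : (fromBlocks (a • (1 : Matrix m m K)) (fromCols (-c • B) 0) (fromRows (-c • Bᵀ) 0)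
        (fromBlocks (b • (1 : Matrix n n K)) (-c • of fun _ _ => 1)
          (-c • of fun _ _ => 1) N)).det =
      a ^ Fintype.card m *
        ((P - (Fintype.card l * c ^ 2 / s) • of fun _ _ => 1).det * N.det) := by
    rw [det_fromBlocks_of_mul_eq_smul₁₁ ha (by simp), det_smul, det_one, mul_one]
    have h : fromBlocks (b • (1 : Matrix n n K)) (-c • of fun _ _ => 1)
          (-c • of fun _ _ => 1) N -
          a⁻¹ • (fromRows (-c • Bᵀ) (0 : Matrix l m K) * fromCols (-c • B) 0) =
        fromBlocks P (-c • of fun _ _ => 1) (-c • of fun _ _ => 1) N := by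
      rw [fromRows_mul_fromCols, fromBlocks_smul, sub_eq_add_neg, fromBlocks_neg, fromBlocks_add]
      congr 1
      · rw [Matrix.smul_mul, Matrix.mul_smul, smul_smul, smul_smul, hP, Matrix.smul_mul,
          sub_eq_add_neg]
        congr 3
        field_simp
      all_goals simp
    rw [h, det_fromBlocks_of_mul_eq_smul₂₂ hs (by rw [Matrix.mul_smul, hN, smul_comm])]
    congr 4
    ext i j
    simp [Matrix.mul_apply]
    field_simp
  have h₂ := mul_det_sub_smul_allOnes hp (P := P) (by
    rw [hP, sub_mul, Matrix.smul_mul, Matrix.smul_mul, Matrix.smul_mul, hB, one_mul, smul_smul,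
      ← sub_smul]
    congr 2
    ring) (Fintype.card l * c ^ 2 / s)
  have h₃ := pow_card_mul_det_smul_one_sub_mul b ((c ^ 2 / a) • Bᵀ) B
  have h₄ : ((a * b) • (1 : Matrix m m K) - c ^ 2 • (B * Bᵀ)).det =
      a ^ Fintype.card m * (b • (1 : Matrix m m K) - B * ((c ^ 2 / a) • Bᵀ)).det := by
    rw [← det_smul, smul_sub, smul_smul, Matrix.mul_smul, smul_smul, mul_div_cancel₀ _ ha]
  rw [← hP] at h₃
  rw [h₁, h₄]
  set Y := (P - (Fintype.card l * c ^ 2 / s) • of fun _ _ => 1).det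
  set Z := (b • (1 : Matrix m m K) - B * ((c ^ 2 / a) • Bᵀ)).det
  have e₁ : a * b - q * c ^ 2 = a * (b - q * c ^ 2 / a) := by field_simp
  have e₂ : s * (a * b - q * c ^ 2) - Fintype.card n * Fintype.card l * c ^ 2 * a =
      s * a * (b - q * c ^ 2 / a - Fintype.card l * c ^ 2 / s * Fintype.card n) := by
    field_simp
  rw [e₂, e₁]
  generalize b - q * c ^ 2 / a - Fintype.card l * c ^ 2 / s * Fintype.card n = t at *
  generalize b - q * c ^ 2 / a = p at *
  linear_combination (b ^ Fintype.card m * a * s * a ^ Fintype.card m * N.det) * h₂ +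
    (t * s * a * a ^ Fintype.card m * N.det) * h₃

/-- If `∏ (X - μ i)` is the characteristic polynomial of `A`, then `t - c A` has determinant
`∏ (t - c μ i)`. -/
lemma det_smul_one_sub_smul_of_charpoly_eq_prod {ι : Type*} [Fintype ι] {A : Matrix m m K}
    {μ : ι → K} (h : A.charpoly = ∏ i, (X - C (μ i))) (t c : K) :
    (t • (1 : Matrix m m K) - c • A).det = ∏ i, (t - c * μ i) := by
  have hcard : Fintype.card m = Fintype.card ι := by
    simpa using congrArg natDegree h
  rcases eq_or_ne c 0 with rfl | hc
  · simp [hcard]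
  · have h' := congrArg (Polynomial.eval (c⁻¹ * t)) h
    rw [eval_charpoly, eval_prod] at h'
    have : t • (1 : Matrix m m K) - c • A = c • (scalar m (c⁻¹ * t) - A) := by
      rw [smul_sub, scalar_apply, ← smul_one_eq_diagonal, smul_smul, mul_inv_cancel_left₀ hc]
    rw [this, det_smul, h', hcard, ← Finset.card_univ, ← Finset.prod_const,
      ← Finset.prod_mul_distrib]
    refine Finset.prod_congr rfl fun i _ => ?_
    simp only [eval_sub, eval_X, eval_C]
    field_simp

end BlockDeterminants

section Graphs

variable {V W : Type*} [Fintype V] [Fintype W]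

lemma Aalpha_apply (G : SimpleGraph V) (α : ℝ) (u v : V) :
    Aalpha G α u v =
      (if u = v then α * G.degree u else 0) + if G.Adj u v then 1 - α else 0 := by
  simp [Aalpha, diagonal_apply]

lemma degree_cast_eq_sum (G : SimpleGraph V) (v : V) :
    (G.degree v : ℝ) = ∑ w, if G.Adj v w then 1 else 0 := by
  rw [← SimpleGraph.card_neighborFinset_eq_degree, SimpleGraph.neighborFinset_eq_filter,
    Finset.sum_boole]

lemma sum_Aalpha_of_isRegularOfDegree {G : SimpleGraph V} {r : ℕ} (hG : G.IsRegularOfDegree r)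
    (α : ℝ) (v : V) : ∑ w, Aalpha G α v w = r := by
  simp only [Aalpha_apply, Finset.sum_add_distrib, Finset.sum_ite_eq, Finset.mem_univ, if_true]
  rw [← Finset.sum_filter, Finset.sum_const, ← SimpleGraph.neighborFinset_eq_filter,
    SimpleGraph.card_neighborFinset_eq_degree, hG.degree_eq]
  simp
  ring

lemma Aalpha_charpoly_isRoot_degree [DecidableEq V] [Nonempty V] {G : SimpleGraph V} {r : ℕ}
    (hG : G.IsRegularOfDegree r) (α : ℝ) : (Aalpha G α).charpoly.IsRoot (r : ℝ) := by
  rw [IsRoot, eval_charpoly, ← exists_mulVec_eq_zero_iff]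
  refine ⟨fun _ => 1, fun h => by simpa using congrFun h (Classical.arbitrary V), ?_⟩
  ext v
  simp only [mulVec, dotProduct, mul_one, Matrix.sub_apply, Finset.sum_sub_distrib,
    sum_Aalpha_of_isRegularOfDegree hG, scalar_apply, diagonal_apply, Finset.sum_ite_eq,
    Finset.mem_univ, if_true, sub_self, Pi.zero_apply]

lemma le_of_Aalpha_charpoly_isRoot [DecidableEq V] {G : SimpleGraph V} {r : ℕ}
    (hG : G.IsRegularOfDegree r) {α : ℝ} (hα : α ∈ Set.Icc (0 : ℝ) 1) {μ : ℝ}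
    (hμ : (Aalpha G α).charpoly.IsRoot μ) : μ ≤ r := by
  have h : Module.End.HasEigenvalue (Matrix.toLin' (Aalpha G α)) μ := by
    rw [Module.End.hasEigenvalue_iff_isRoot_charpoly, Matrix.charpoly_toLin']
    exact hμ
  obtain ⟨k, hk⟩ := eigenvalue_mem_ball h
  have hsum : ∑ j ∈ Finset.univ.erase k, ‖Aalpha G α k j‖ =
      ∑ j ∈ Finset.univ.erase k, Aalpha G α k j := by
    refine Finset.sum_congr rfl fun j hj => Real.norm_of_nonneg ?_
    rw [Aalpha_apply, if_neg (Finset.ne_of_mem_erase hj).symm]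
    split_ifs <;> linarith [hα.2]
  rw [hsum, Finset.sum_erase_eq_sub (Finset.mem_univ k), sum_Aalpha_of_isRegularOfDegree hG,
    Metric.mem_closedBall, Real.dist_eq] at hk
  linarith [le_abs_self (μ - Aalpha G α k k)]

/-- The largest `A_α`-eigenvalue of a regular graph is its degree. -/
lemma Aalpha_largest_eigenvalue {n r : ℕ} {G : SimpleGraph (Fin n)} (hG : G.IsRegularOfDegree r)
    {α : ℝ} (hα : α ∈ Set.Icc (0 : ℝ) 1) {μ : Fin n → ℝ} (hμ : Antitone μ)
    (hch : (Aalpha G α).charpoly = ∏ i, (X - C (μ i))) (i : Fin n) (hi : i.val = 0) :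
    μ i = r := by
  have : Nonempty (Fin n) := ⟨i⟩
  have hroot (x : ℝ) : (Aalpha G α).charpoly.IsRoot x ↔ ∃ j, x = μ j := by
    rw [hch]
    simp [IsRoot, eval_prod, Finset.prod_eq_zero_iff, sub_eq_zero]
  obtain ⟨j, hj⟩ := (hroot r).1 (Aalpha_charpoly_isRoot_degree hG α)
  refine le_antisymm (le_of_Aalpha_charpoly_isRoot hG hα ((hroot _).2 ⟨i, rfl⟩)) ?_
  rw [hj]
  exact hμ (Fin.le_def.2 (by omega))

/-- The vertex-edge incidence matrix, with columns indexed by the edges of the graph. -/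
def edgeIncMatrix (G : SimpleGraph V) : Matrix V G.edgeSet ℝ :=
  (G.incMatrix ℝ).submatrix id (↑)

lemma edgeIncMatrix_apply {U : Type*} (G : SimpleGraph U) (v : U) (e : G.edgeSet) :
    edgeIncMatrix G v e = if v ∈ (e : Sym2 U) then 1 else 0 := by
  simp [edgeIncMatrix, SimpleGraph.incMatrix_apply', SimpleGraph.incidenceSet]

lemma sum_edgeSet_eq_sum (G : SimpleGraph V) [Fintype G.edgeSet] (f : Sym2 V → ℝ)
    (hf : ∀ e ∉ G.edgeSet, f e = 0) : ∑ e : G.edgeSet, f e = ∑ e, f e := by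
  rw [← Finset.sum_subtype G.edgeFinset (p := (· ∈ G.edgeSet)) (by simp) f]
  exact Finset.sum_subset (Finset.subset_univ _) fun e _ he => hf e (by simpa using he)

lemma sum_edgeIncMatrix_row (G : SimpleGraph V) [Fintype G.edgeSet] (v : V) :
    ∑ e, edgeIncMatrix G v e = G.degree v := by
  rw [← SimpleGraph.sum_incMatrix_apply]
  exact sum_edgeSet_eq_sum G _ fun e he =>
    G.incMatrix_of_notMem_incidenceSet fun h => he h.1

lemma sum_edgeIncMatrix_col (G : SimpleGraph V) (e : G.edgeSet) :
    ∑ v, edgeIncMatrix G v e = 2 :=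
  G.sum_incMatrix_apply_of_mem_edgeSet e.2

lemma edgeIncMatrix_mul_transpose (G : SimpleGraph V) [Fintype G.edgeSet] :
    edgeIncMatrix G * (edgeIncMatrix G)ᵀ =
      diagonal (fun v => (G.degree v : ℝ)) + G.adjMatrix ℝ := by
  have h : edgeIncMatrix G * (edgeIncMatrix G)ᵀ = G.incMatrix ℝ * (G.incMatrix ℝ)ᵀ := by
    ext u v
    exact sum_edgeSet_eq_sum G (fun e => G.incMatrix ℝ u e * G.incMatrix ℝ v e) fun e he => by
      rw [G.incMatrix_of_notMem_incidenceSet fun h => he h.1, zero_mul]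
  rw [h, SimpleGraph.incMatrix_mul_transpose]
  ext u v
  by_cases huv : u = v
  · subst huv; simp
  · simp [huv]

lemma transpose_edgeIncMatrix_mul_self_mul_allOnes {G : SimpleGraph V} [Fintype G.edgeSet] {r : ℕ}
    (hG : G.IsRegularOfDegree r) :
    (edgeIncMatrix G)ᵀ * edgeIncMatrix G * (of fun _ _ => 1 : Matrix G.edgeSet G.edgeSet ℝ) =
      (2 * r : ℝ) • of fun _ _ => 1 := by
  rw [Matrix.mul_assoc]
  ext e f
  simp [Matrix.mul_apply, sum_edgeIncMatrix_row, hG.degree_eq, ← Finset.sum_mul,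
    sum_edgeIncMatrix_col]

section Adjacency

variable (G₁ : SimpleGraph V) (G₂ : SimpleGraph W)

lemma scalar_sub_Aalpha_subdivisionEdgeJoin [Fintype G₁.edgeSet] [DecidableEq V]
    [DecidableEq G₁.edgeSet] [DecidableEq W] {r₁ : ℕ} (hG₁ : G₁.IsRegularOfDegree r₁) (α x : ℝ) :
    scalar (V ⊕ (G₁.edgeSet ⊕ W)) x - Aalpha (subdivisionEdgeJoin G₁ G₂) α =
      fromBlocks ((x - α * r₁) • (1 : Matrix V V ℝ))
        (fromCols (-(1 - α) • edgeIncMatrix G₁) 0) (fromRows (-(1 - α) • (edgeIncMatrix G₁)ᵀ) 0)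
        (fromBlocks ((x - α * (2 + Fintype.card W)) • (1 : Matrix G₁.edgeSet G₁.edgeSet ℝ))
          (-(1 - α) • of fun _ _ => 1) (-(1 - α) • of fun _ _ => 1)
          ((x - α * Fintype.card G₁.edgeSet) • (1 : Matrix W W ℝ) - (1 : ℝ) • Aalpha G₂ α)) := by
  have adj₁₁ (u v : V) : ¬ (subdivisionEdgeJoin G₁ G₂).Adj (.inl u) (.inl v) := by
    simp [subdivisionEdgeJoin]
  have adj₁₂ (u : V) (e : G₁.edgeSet) :
      (subdivisionEdgeJoin G₁ G₂).Adj (.inl u) (.inr (.inl e)) ↔ u ∈ (e : Sym2 V) := by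
    simp [subdivisionEdgeJoin]
  have adj₂₁ (u : V) (e : G₁.edgeSet) :
      (subdivisionEdgeJoin G₁ G₂).Adj (.inr (.inl e)) (.inl u) ↔ u ∈ (e : Sym2 V) := by
    simp [subdivisionEdgeJoin]
  have adj₁₃ (u : V) (w : W) : ¬ (subdivisionEdgeJoin G₁ G₂).Adj (.inl u) (.inr (.inr w)) := by
    simp [subdivisionEdgeJoin]
  have adj₃₁ (u : V) (w : W) : ¬ (subdivisionEdgeJoin G₁ G₂).Adj (.inr (.inr w)) (.inl u) := by
    simp [subdivisionEdgeJoin]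
  have adj₂₂ (e f : G₁.edgeSet) :
      ¬ (subdivisionEdgeJoin G₁ G₂).Adj (.inr (.inl e)) (.inr (.inl f)) := by
    simp [subdivisionEdgeJoin]
  have adj₂₃ (e : G₁.edgeSet) (w : W) :
      (subdivisionEdgeJoin G₁ G₂).Adj (.inr (.inl e)) (.inr (.inr w)) := by
    simp [subdivisionEdgeJoin]
  have adj₃₂ (e : G₁.edgeSet) (w : W) :
      (subdivisionEdgeJoin G₁ G₂).Adj (.inr (.inr w)) (.inr (.inl e)) := (adj₂₃ e w).symm
  have adj₃₃ (u w : W) :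
      (subdivisionEdgeJoin G₁ G₂).Adj (.inr (.inr u)) (.inr (.inr w)) ↔ G₂.Adj u w := by
    simp only [subdivisionEdgeJoin, SimpleGraph.fromRel_adj, G₂.adj_comm w u, or_self]
    exact ⟨And.right, fun h => ⟨by simpa using h.ne, h⟩⟩
  have deg₁ (u : V) : ((subdivisionEdgeJoin G₁ G₂).degree (.inl u) : ℝ) = r₁ := by
    rw [degree_cast_eq_sum, ← hG₁.degree_eq u, ← sum_edgeIncMatrix_row]
    simp [-Finset.sum_boole, adj₁₁, adj₁₂, adj₁₃, edgeIncMatrix_apply]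
    congr!
  have deg₂ (e : G₁.edgeSet) :
      ((subdivisionEdgeJoin G₁ G₂).degree (.inr (.inl e)) : ℝ) = 2 + Fintype.card W := by
    rw [degree_cast_eq_sum, ← sum_edgeIncMatrix_col G₁ e]
    simp [-Finset.sum_boole, adj₂₁, adj₂₂, adj₂₃, edgeIncMatrix_apply]
    congr!
  have deg₃ (w : W) : ((subdivisionEdgeJoin G₁ G₂).degree (.inr (.inr w)) : ℝ) =
      Fintype.card G₁.edgeSet + G₂.degree w := by
    rw [degree_cast_eq_sum, degree_cast_eq_sum G₂]
    simp [-Finset.sum_boole, adj₃₁, adj₃₂, adj₃₃]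
  ext (u | e | w) (u' | e' | w')
  · simp [Aalpha_apply, adj₁₁, deg₁, diagonal_apply, one_apply]
    split_ifs <;> ring
  · simp [Aalpha_apply, adj₁₂, edgeIncMatrix_apply]
    split_ifs <;> ring
  · simp [Aalpha_apply, adj₁₃]
  · simp [Aalpha_apply, adj₂₁, edgeIncMatrix_apply]
    split_ifs <;> ring
  · simp [Aalpha_apply, adj₂₂, deg₂, diagonal_apply, one_apply, -SetLike.coe_eq_coe]
    split_ifs <;> ring
  · simp [Aalpha_apply, adj₂₃]
  · simp [Aalpha_apply, adj₃₁]
  · simp [Aalpha_apply, adj₃₂]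
  · simp [Aalpha_apply, adj₃₃, deg₃, diagonal_apply, one_apply]
    split_ifs <;> ring

end Adjacency

end Graphs

section Spectrum

lemma Fin.prod_eq_mul_prod_filter_val_ne_zero {n : ℕ} (f : Fin n → ℝ) (i₀ : Fin n)
    (hi₀ : i₀.val = 0) :
    ∏ i, f i = f i₀ * ∏ i ∈ Finset.univ.filter (fun i : Fin n => i.val ≠ 0), f i := by
  rw [← Finset.mul_prod_erase _ _ (Finset.mem_univ i₀)]
  congr 2
  ext i
  simp [Fin.ext_iff, hi₀]

variable {n₁ m₁ n₂ r₁ r₂ : ℕ} {G₁ : SimpleGraph (Fin n₁)} {G₂ : SimpleGraph (Fin n₂)}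

lemma eval_charpoly_Aalpha_subdivisionEdgeJoin
    (hconn₁ : G₁.Connected) (hconn₂ : G₂.Connected)
    (hreg₁ : G₁.IsRegularOfDegree r₁) (hreg₂ : G₂.IsRegularOfDegree r₂)
    (hm : Fintype.card G₁.edgeSet = m₁)
    {α : ℝ} (hα : α ∈ Set.Icc (0 : ℝ) 1)
    {μ₁ : Fin n₁ → ℝ} (hμ₁ : Antitone μ₁)
    (hμ₁ch : (Aalpha G₁ α).charpoly = ∏ i, (X - C (μ₁ i)))
    {μ₂ : Fin n₂ → ℝ} (hμ₂ : Antitone μ₂)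
    (hμ₂ch : (Aalpha G₂ α).charpoly = ∏ i, (X - C (μ₂ i)))
    {x : ℝ} (ha : x - α * r₁ ≠ 0) (hs : x - (α * m₁ + r₂) ≠ 0)
    (hq : (x - α * r₁) * (x - α * (2 + n₂)) - 2 * r₁ * (1 - α) ^ 2 ≠ 0) :
    (x - α * (2 + n₂)) ^ n₁ * (Aalpha (subdivisionEdgeJoin G₁ G₂) α).charpoly.eval x =
      (x - α * (2 + n₂)) ^ m₁ *
        ((∏ i ∈ Finset.univ.filter (fun i : Fin n₂ => i.val ≠ 0), (x - (α * m₁ + μ₂ i))) *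
        (∏ i ∈ Finset.univ.filter (fun i : Fin n₁ => i.val ≠ 0),
          (x ^ 2 - α * (2 + r₁ + n₂) * x
            + (α ^ 2 * r₁ * n₂ + 3 * α * r₁ - r₁ - (1 - α) * μ₁ i))) *
        ((x - (α * m₁ + r₂)) *
            (x ^ 2 - α * (2 + r₁ + n₂) * x + r₁ * (α ^ 2 * n₂ + 4 * α - 2))
          - m₁ * n₂ * (1 - α) ^ 2 * (x - α * r₁))) := by
  obtain ⟨v₀⟩ := hconn₁.nonempty
  obtain ⟨w₀⟩ := hconn₂.nonempty
  have h₁ := Aalpha_largest_eigenvalue hreg₁ hα hμ₁ hμ₁ch ⟨0, v₀.pos⟩ rfl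
  have h₂ := Aalpha_largest_eigenvalue hreg₂ hα hμ₂ hμ₂ch ⟨0, w₀.pos⟩ rfl
  have hN : ((x - α * m₁) • (1 : Matrix (Fin n₂) (Fin n₂) ℝ) - (1 : ℝ) • Aalpha G₂ α) *
      (of fun _ _ => 1 : Matrix (Fin n₂) G₁.edgeSet ℝ) =
      (x - (α * m₁ + r₂)) • of fun _ _ => 1 := by
    rw [Matrix.sub_mul, Matrix.smul_mul, one_smul, Matrix.one_mul]
    ext w e
    simp [Matrix.mul_apply, sum_Aalpha_of_isRegularOfDegree hreg₂]
    ring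
  have hBB : ((x - α * r₁) * (x - α * (2 + n₂))) • (1 : Matrix (Fin n₁) (Fin n₁) ℝ) -
      (1 - α) ^ 2 • (edgeIncMatrix G₁ * (edgeIncMatrix G₁)ᵀ) =
      ((x - α * r₁) * (x - α * (2 + n₂)) - (1 - α) ^ 2 * r₁ + (1 - α) * α * r₁) •
        (1 : Matrix (Fin n₁) (Fin n₁) ℝ) - (1 - α) • Aalpha G₁ α := by
    rw [edgeIncMatrix_mul_transpose]
    ext u v
    by_cases huv : u = v
    · subst huv
      simp [Aalpha, hreg₁.degree_eq]
      ring
    · simp [Aalpha, huv, sq]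
  have key := det_fromBlocks_subdivision_join (x - α * r₁) (x - α * (2 + n₂)) (1 - α)
    (x - (α * m₁ + r₂)) (2 * r₁) (edgeIncMatrix G₁) _ ha hs hq hN
    (transpose_edgeIncMatrix_mul_self_mul_allOnes hreg₁)
  have hM := scalar_sub_Aalpha_subdivisionEdgeJoin G₁ G₂ hreg₁ α x
  rw [Fintype.card_fin, hm] at hM
  rw [hBB, det_smul_one_sub_smul_of_charpoly_eq_prod hμ₁ch,
    det_smul_one_sub_smul_of_charpoly_eq_prod hμ₂ch, ← hM, Fintype.card_fin, Fintype.card_fin, hm,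
    Fin.prod_eq_mul_prod_filter_val_ne_zero _ ⟨0, v₀.pos⟩ rfl,
    Fin.prod_eq_mul_prod_filter_val_ne_zero _ ⟨0, w₀.pos⟩ rfl, h₁, h₂] at key
  rw [eval_charpoly]
  refine mul_left_cancel₀ (mul_ne_zero hq hs) ?_
  have e₂ : ∏ i ∈ Finset.univ.filter (fun i : Fin n₂ => i.val ≠ 0), (x - α * m₁ - 1 * μ₂ i) =
      ∏ i ∈ Finset.univ.filter (fun i : Fin n₂ => i.val ≠ 0), (x - (α * m₁ + μ₂ i)) :=
    Finset.prod_congr rfl fun i _ => by ring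
  have e₁ : ∏ i ∈ Finset.univ.filter (fun i : Fin n₁ => i.val ≠ 0),
      ((x - α * r₁) * (x - α * (2 + n₂)) - (1 - α) ^ 2 * r₁ + (1 - α) * α * r₁ -
        (1 - α) * μ₁ i) =
      ∏ i ∈ Finset.univ.filter (fun i : Fin n₁ => i.val ≠ 0),
          (x ^ 2 - α * (2 + r₁ + n₂) * x
            + (α ^ 2 * r₁ * n₂ + 3 * α * r₁ - r₁ - (1 - α) * μ₁ i)) :=
    Finset.prod_congr rfl fun i _ => by ring
  rw [e₁, e₂] at key
  linear_combination key

/-- Both sides are multiplied by a power of `X - α (2 + n₂)`, so that no assumption on the sign of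
`m₁ - n₁` is needed. -/
lemma pow_mul_charpoly_Aalpha_subdivisionEdgeJoin
    (hconn₁ : G₁.Connected) (hconn₂ : G₂.Connected)
    (hreg₁ : G₁.IsRegularOfDegree r₁) (hreg₂ : G₂.IsRegularOfDegree r₂)
    (hm : Fintype.card G₁.edgeSet = m₁)
    {α : ℝ} (hα : α ∈ Set.Icc (0 : ℝ) 1)
    {μ₁ : Fin n₁ → ℝ} (hμ₁ : Antitone μ₁)
    (hμ₁ch : (Aalpha G₁ α).charpoly = ∏ i, (X - C (μ₁ i)))
    {μ₂ : Fin n₂ → ℝ} (hμ₂ : Antitone μ₂)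
    (hμ₂ch : (Aalpha G₂ α).charpoly = ∏ i, (X - C (μ₂ i))) :
    (X - C (α * (2 + n₂))) ^ n₁ * (Aalpha (subdivisionEdgeJoin G₁ G₂) α).charpoly =
      (X - C (α * (2 + n₂))) ^ m₁ *
        ((∏ i ∈ Finset.univ.filter (fun i : Fin n₂ => i.val ≠ 0), (X - C (α * m₁ + μ₂ i))) *
        (∏ i ∈ Finset.univ.filter (fun i : Fin n₁ => i.val ≠ 0),
          (X ^ 2 - C (α * (2 + r₁ + n₂)) * X
            + C (α ^ 2 * r₁ * n₂ + 3 * α * r₁ - r₁ - (1 - α) * μ₁ i))) *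
        ((X - C (α * m₁ + r₂)) *
            (X ^ 2 - C (α * (2 + r₁ + n₂)) * X + C (r₁ * (α ^ 2 * n₂ + 4 * α - 2)))
          - C (m₁ * n₂ * (1 - α) ^ 2) * (X - C (α * r₁)))) := by
  have hquad : (X - C (α * r₁)) * (X - C (α * (2 + n₂))) - C (2 * r₁ * (1 - α) ^ 2) ≠ 0 := by
    refine Monic.ne_zero (Monic.sub_of_left ((monic_X_sub_C _).mul (monic_X_sub_C _)) ?_)
    refine degree_C_le.trans_lt ?_
    rw [degree_mul, degree_X_sub_C, degree_X_sub_C]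
    norm_num
  refine mul_left_cancel₀ (mul_ne_zero (mul_ne_zero (X_sub_C_ne_zero (α * r₁))
    (X_sub_C_ne_zero (α * m₁ + r₂))) hquad) (Polynomial.funext fun x => ?_)
  by_cases hx : x - α * r₁ ≠ 0 ∧ x - (α * m₁ + r₂) ≠ 0 ∧
      (x - α * r₁) * (x - α * (2 + n₂)) - 2 * r₁ * (1 - α) ^ 2 ≠ 0
  · have := eval_charpoly_Aalpha_subdivisionEdgeJoin hconn₁ hconn₂ hreg₁ hreg₂ hm hα hμ₁ hμ₁ch
      hμ₂ hμ₂ch hx.1 hx.2.1 hx.2.2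
    rw [eval_mul, eval_mul (q := _ ^ m₁ * _)]
    congr 1
    simp only [eval_mul, eval_pow, eval_sub, eval_add, eval_X, eval_C, eval_prod]
    exact this
  · have : eval x ((X - C (α * r₁)) * (X - C (α * m₁ + r₂)) *
        ((X - C (α * r₁)) * (X - C (α * (2 + n₂))) - C (2 * r₁ * (1 - α) ^ 2))) = 0 := by
      simp only [eval_mul, eval_sub, eval_X, eval_C, mul_eq_zero]
      tauto
    rw [eval_mul, eval_mul (q := _ ^ m₁ * _), this, zero_mul, zero_mul]

end Spectrum

/-- Corollary: the `A_α`-spectrum (as the factorization of the `A_α`-characteristic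
polynomial) of the subdivision-edge join `G₁ ∨̲ G₂` of an `r₁`-regular graph `G₁`
and an `r₂`-regular graph `G₂`, in the cases `r₁ = 1` and `r₁ ≥ 2`. -/
theorem Aalpha_spectrum_subdivisionEdgeJoin_regular
    {n₁ m₁ n₂ r₁ r₂ : ℕ} (G₁ : SimpleGraph (Fin n₁)) (G₂ : SimpleGraph (Fin n₂))
    (hconn₁ : G₁.Connected) (hconn₂ : G₂.Connected)
    (hreg₁ : G₁.IsRegularOfDegree r₁) (hreg₂ : G₂.IsRegularOfDegree r₂)
    (hm : Fintype.card G₁.edgeSet = m₁)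
    (α : ℝ) (hα : α ∈ Set.Icc (0 : ℝ) 1)
    (μ₁ : Fin n₁ → ℝ) (hμ₁ : Antitone μ₁)
    (hμ₁ch : (Aalpha G₁ α).charpoly = ∏ i, (X - C (μ₁ i)))
    (μ₂ : Fin n₂ → ℝ) (hμ₂ : Antitone μ₂)
    (hμ₂ch : (Aalpha G₂ α).charpoly = ∏ i, (X - C (μ₂ i))) :
    (r₁ = 1 →
      (Aalpha (subdivisionEdgeJoin G₁ G₂) α).charpoly =
        (X - C α) *
        (∏ i ∈ Finset.univ.filter (fun i : Fin n₂ => i.val ≠ 0),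
          (X - C (α + μ₂ i))) *
        ((X - C (α + r₂)) *
            (X ^ 2 - C (α * (3 + n₂)) * X + C (α ^ 2 * n₂ + 4 * α - 2))
          - C (n₂ * (1 - α) ^ 2) * (X - C α))) ∧
    (2 ≤ r₁ →
      (Aalpha (subdivisionEdgeJoin G₁ G₂) α).charpoly =
        (X - C (α * (2 + n₂))) ^ (m₁ - n₁) *
        (∏ i ∈ Finset.univ.filter (fun i : Fin n₂ => i.val ≠ 0),
          (X - C (α * m₁ + μ₂ i))) *
        (∏ i ∈ Finset.univ.filter (fun i : Fin n₁ => i.val ≠ 0),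
          (X ^ 2 - C (α * (2 + r₁ + n₂)) * X
            + C (α ^ 2 * r₁ * n₂ + 3 * α * r₁ - r₁ - (1 - α) * μ₁ i))) *
        ((X - C (α * m₁ + r₂)) *
            (X ^ 2 - C (α * (2 + r₁ + n₂)) * X + C (r₁ * (α ^ 2 * n₂ + 4 * α - 2)))
          - C (m₁ * n₂ * (1 - α) ^ 2) * (X - C (α * r₁)))) := by
  have key := pow_mul_charpoly_Aalpha_subdivisionEdgeJoin hconn₁ hconn₂ hreg₁ hreg₂ hm hα hμ₁
    hμ₁ch hμ₂ hμ₂ch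
  have hβ : X - C (α * (2 + n₂)) ≠ 0 := X_sub_C_ne_zero _
  have hdeg : n₁ * r₁ = 2 * m₁ := by
    have h := G₁.sum_degrees_eq_twice_card_edges
    simp only [hreg₁.degree_eq, Finset.sum_const, Finset.card_univ, Fintype.card_fin,
      smul_eq_mul] at h
    rw [h, ← hm, ← SimpleGraph.edgeFinset_card]
  refine ⟨?_, fun hr => ?_⟩
  · rintro rfl
    have hn₁ : 0 < n₁ := hconn₁.nonempty.elim Fin.pos
    have hle := hconn₁.card_vert_le_card_edgeSet_add_one
    rw [Nat.card_eq_fintype_card, Nat.card_eq_fintype_card, Fintype.card_fin, hm] at hle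
    obtain rfl : m₁ = 1 := by omega
    obtain rfl : n₁ = 2 := by omega
    have h₀ : μ₁ 0 = (1 : ℕ) := Aalpha_largest_eigenvalue hreg₁ hα hμ₁ hμ₁ch 0 rfl
    have h₁ : μ₁ 1 = 2 * α - 1 := by
      have h := trace_eq_neg_charpoly_nextCoeff (Aalpha G₁ α)
      rw [hμ₁ch, prod_X_sub_C_nextCoeff, neg_neg, Fin.sum_univ_two, h₀, trace, Fin.sum_univ_two]
        at h
      simp only [diag_apply, Aalpha_apply, hreg₁.degree_eq] at h
      simp at h
      linear_combination -h
    refine mul_left_cancel₀ (pow_ne_zero 2 hβ) (key.trans ?_)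
    have hfilter : Finset.univ.filter (fun i : Fin 2 => i.val ≠ 0) = {1} := by
      ext i; fin_cases i <;> simp
    have hG : X ^ 2 - C (α * (2 + (1 : ℕ) + n₂)) * X
        + C (α ^ 2 * (1 : ℕ) * n₂ + 3 * α * (1 : ℕ) - (1 : ℕ) - (1 - α) * μ₁ 1) =
        (X - C α) * (X - C (α * (2 + n₂))) := by
      rw [h₁]
      simp only [C_add, C_mul, C_sub, C_pow, Nat.cast_one, C_1, C_ofNat]
      ring
    have e₁ : α * (2 + (1 : ℕ) + n₂) = α * (3 + n₂) := by push_cast; ring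
    rw [hfilter, Finset.prod_singleton, hG, e₁]
    simp only [Nat.cast_one, mul_one, one_mul]
    ring
  · have hle : n₁ ≤ m₁ := by nlinarith
    refine mul_left_cancel₀ (pow_ne_zero n₁ hβ) (key.trans ?_)
    rw [← pow_mul_pow_sub _ hle]
    simp only [mul_assoc]
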